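/- arXiv:math/0701149 — 4 statements merged into one kernel-verified Lean document; each statement's English description precedes it below -/
import Mathlib

section
/- For every positive integer n, there is a bijection between the set of odd divisors of n and the set of decompositions of n. -/
/-- `IsDecomp n a m` means the `m` consecutive positive integers
`a+1, a+2, …, a+m` form a decomposition of `n` (a nonempty finite sequence of
consecutive positive integers summing to `n`, of length `m`). -/
def IsDecomp (n a m : ℕ) : Prop :=
  1 ≤ m ∧ (Finset.range m).sum (fun i => a + i + 1) = n

/-!
Twice the sum of `a + 1, …, a + m` is `m * (2 * a + m + 1)`, a product of two factors of opposite
parity, the smaller of which is the length `m`. Call them `k` (odd) and `2 * c` (even), so that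
the sum is `k * c`. The pair `(k, c)` determines the run, because `m` and `2 * a + m + 1` are the
minimum and the maximum of `k` and `2 * c`; and every pair with `k` odd arises. Hence the
decompositions of `n > 0` correspond to the factorizations `n = k * c` with `k` odd.
-/

/-- The odd one of the two factors `m` and `2 * a + m + 1` of twice the sum of the run
`a + 1, …, a + m`: the odd divisor attached to that run. -/
def oddFactor (a m : ℕ) : ℕ := if Odd m then m else 2 * a + m + 1

/-- Half of the even one of the two factors `m` and `2 * a + m + 1`, complementary to
`oddFactor a m`: the middle term of the run `a + 1, …, a + m` if `m` is odd, and the number of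
pairs of opposite terms if `m` is even. Both divisions are exact. -/
def cofactor (a m : ℕ) : ℕ := if Odd m then a + (m + 1) / 2 else m / 2

section Factors

variable (a m j : ℕ)

@[simp]
theorem oddFactor_two_mul : oddFactor a (2 * j) = 2 * (a + j) + 1 := by
  simp [oddFactor, mul_add]

@[simp]
theorem oddFactor_two_mul_add_one : oddFactor a (2 * j + 1) = 2 * j + 1 := by
  simp [oddFactor]

@[simp]
theorem cofactor_two_mul : cofactor a (2 * j) = j := by
  simp [cofactor]

@[simp]
theorem cofactor_two_mul_add_one : cofactor a (2 * j + 1) = a + j + 1 := by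
  simp only [cofactor, odd_two_mul_add_one, if_true]
  lia

theorem odd_oddFactor : Odd (oddFactor a m) := by
  obtain ⟨j, rfl | rfl⟩ := m.even_or_odd' <;> simp

theorem min_oddFactor_two_mul_cofactor : min (oddFactor a m) (2 * cofactor a m) = m := by
  obtain ⟨j, rfl | rfl⟩ := m.even_or_odd'
  · rw [oddFactor_two_mul, cofactor_two_mul]
    lia
  · rw [oddFactor_two_mul_add_one, cofactor_two_mul_add_one]
    lia

theorem max_oddFactor_two_mul_cofactor :
    max (oddFactor a m) (2 * cofactor a m) = 2 * a + m + 1 := by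
  obtain ⟨j, rfl | rfl⟩ := m.even_or_odd'
  · rw [oddFactor_two_mul, cofactor_two_mul]
    lia
  · rw [oddFactor_two_mul_add_one, cofactor_two_mul_add_one]
    lia

theorem two_mul_sum_range_add_add_one :
    2 * ∑ i ∈ Finset.range m, (a + i + 1) = m * (2 * a + m + 1) := by
  induction m with
  | zero => simp
  | succ m ih => rw [Finset.sum_range_succ, mul_add, ih]; ring

theorem sum_range_add_add_one_eq_oddFactor_mul_cofactor :
    ∑ i ∈ Finset.range m, (a + i + 1) = oddFactor a m * cofactor a m := by
  refine Nat.eq_of_mul_eq_mul_left two_pos ?_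
  calc 2 * ∑ i ∈ Finset.range m, (a + i + 1)
    _ = m * (2 * a + m + 1) := two_mul_sum_range_add_add_one a m
    _ = oddFactor a m * (2 * cofactor a m) := by
      rw [← max_oddFactor_two_mul_cofactor a m, ← min_mul_max (oddFactor a m),
        min_oddFactor_two_mul_cofactor]
    _ = 2 * (oddFactor a m * cofactor a m) := mul_left_comm ..

end Factors

theorem eq_and_eq_of_oddFactor_eq_of_cofactor_eq {a m b l : ℕ}
    (hodd : oddFactor a m = oddFactor b l) (hco : cofactor a m = cofactor b l) :
    a = b ∧ m = l := by
  have hmin : m = l := by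
    rw [← min_oddFactor_two_mul_cofactor a m, hodd, hco, min_oddFactor_two_mul_cofactor]
  have hmax : 2 * a + m + 1 = 2 * b + l + 1 := by
    rw [← max_oddFactor_two_mul_cofactor a m, hodd, hco, max_oddFactor_two_mul_cofactor]
  lia

theorem exists_oddFactor_eq_and_cofactor_eq {k : ℕ} (hk : Odd k) (c : ℕ) :
    ∃ a m, oddFactor a m = k ∧ cofactor a m = c := by
  obtain ⟨j, rfl⟩ := hk
  obtain hcj | hjc := le_or_gt c j
  · obtain ⟨a, rfl⟩ := Nat.exists_eq_add_of_le' hcj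
    exact ⟨a, 2 * c, by simp⟩
  · obtain ⟨a, rfl⟩ := Nat.exists_eq_add_of_le' hjc
    exact ⟨a, 2 * j + 1, by simp [add_assoc]⟩

theorem isDecomp_iff_oddFactor_mul_cofactor_eq {n a m : ℕ} (hn : 0 < n) :
    IsDecomp n a m ↔ oddFactor a m * cofactor a m = n := by
  rw [IsDecomp, sum_range_add_add_one_eq_oddFactor_mul_cofactor, and_iff_right_iff_imp]
  rintro rfl
  have hco : 0 < cofactor a m := Nat.pos_of_mul_pos_left hn
  rw [← min_oddFactor_two_mul_cofactor a m]
  exact le_min (odd_oddFactor a m).pos (by lia)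

theorem existsUnique_isDecomp_and_oddFactor_eq {n k : ℕ} (hn : 0 < n) (hkn : k ∣ n) (hk : Odd k) :
    ∃! p : ℕ × ℕ, IsDecomp n p.1 p.2 ∧ oddFactor p.1 p.2 = k := by
  simp only [isDecomp_iff_oddFactor_mul_cofactor_eq hn]
  obtain ⟨c, rfl⟩ := hkn
  obtain ⟨a, m, rfl, rfl⟩ := exists_oddFactor_eq_and_cofactor_eq hk c
  refine ⟨(a, m), ⟨rfl, rfl⟩, fun p ⟨hmul, hodd⟩ => ?_⟩
  have hco : cofactor p.1 p.2 = cofactor a m :=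
    Nat.eq_of_mul_eq_mul_left hk.pos (hodd ▸ hmul)
  exact Prod.ext_iff.mpr (eq_and_eq_of_oddFactor_eq_of_cofactor_eq hodd hco)

theorem IsDecomp.oddFactor_dvd {n a m : ℕ} (h : IsDecomp n a m) : oddFactor a m ∣ n :=
  ⟨cofactor a m, by rw [← h.2, sum_range_add_add_one_eq_oddFactor_mul_cofactor]⟩

/-- For every positive integer `n`, there is a bijection between the set of odd
divisors of `n` and the set of decompositions of `n`. -/
theorem oddDivisors_equiv_decompositions (n : ℕ) (hn : 0 < n) :
    Nonempty ({k : ℕ // k ∣ n ∧ Odd k} ≃ {p : ℕ × ℕ // IsDecomp n p.1 p.2}) := by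
  let toOddDivisor (p : {p : ℕ × ℕ // IsDecomp n p.1 p.2}) : {k : ℕ // k ∣ n ∧ Odd k} :=
    ⟨oddFactor p.1.1 p.1.2, p.2.oddFactor_dvd, odd_oddFactor _ _⟩
  have bijective_toOddDivisor : toOddDivisor.Bijective := by
    refine (Function.bijective_iff_existsUnique _).mpr fun ⟨k, hkn, hk⟩ => ?_
    obtain ⟨p, ⟨hp, hpk⟩, huniq⟩ := existsUnique_isDecomp_and_oddFactor_eq hn hkn hk
    exact ⟨⟨p, hp⟩, Subtype.ext hpk,
      fun q hq => Subtype.ext (huniq q ⟨q.2, congrArg Subtype.val hq⟩)⟩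
  exact ⟨(Equiv.ofBijective toOddDivisor bijective_toOddDivisor).symm⟩
end

section
/- Let n be a positive integer and k an odd divisor of n with k^2 < 2n. Then the k consecutive integers n/k - (k-1)/2, n/k - (k-1)/2 + 1, ..., n/k + (k-1)/2 are all positive and their sum is n; thus they form a decomposition of n of odd length k. -/
theorem sum_range_two_mul_add_one_id (m : ℕ) :
    ∑ i ∈ Finset.range (2 * m + 1), i = (2 * m + 1) * m := by
  rw [Finset.sum_range_id, Nat.add_sub_cancel, mul_left_comm,
    Nat.mul_div_cancel_left _ two_pos]

theorem sum_range_two_mul_add_one_sub_add {R : Type*} [Ring R] (a : R) (m : ℕ) :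
    ∑ i ∈ Finset.range (2 * m + 1), (a - m + i) = (2 * m + 1 : ℕ) * a := by
  rw [Finset.sum_add_distrib, Finset.sum_const, Finset.card_range, nsmul_eq_mul,
    ← Nat.cast_sum, sum_range_two_mul_add_one_id, Nat.cast_mul, ← mul_add, sub_add_cancel]

theorem lt_mul_div_of_sq_lt_mul {n k c : ℕ} (hdvd : k ∣ n) (hlt : k ^ 2 < c * n) :
    k < c * (n / k) := by
  refine lt_of_mul_lt_mul_left (a := k) ?_ k.zero_le
  calc
    k * k = k ^ 2 := (sq k).symm
    _ < c * n := hlt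
    _ = k * (c * (n / k)) := by rw [mul_left_comm, Nat.mul_div_cancel' hdvd]

/-- Let `n` be a positive integer and `k` an odd divisor of `n` with `k² < 2n`.
Then the `k` consecutive integers `n/k - (k-1)/2 + i`, for `0 ≤ i < k`, are all
positive and their sum is `n`; thus they form a decomposition of `n` of odd
length `k`. -/
theorem odd_decomposition_of_small_odd_divisor (n k : ℕ) (hn : 0 < n)
    (hk : Odd k) (hdvd : k ∣ n) (hlt : k ^ 2 < 2 * n) :
    (∀ i ∈ Finset.range k, 0 < ((n / k : ℕ) : ℤ) - ((k - 1) / 2 : ℕ) + i) ∧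
      (Finset.range k).sum (fun i => ((n / k : ℕ) : ℤ) - ((k - 1) / 2 : ℕ) + i) = n ∧
      Odd k := by
  refine ⟨fun i _ => ?_, ?_, hk⟩
  · have hlt_div : k < 2 * (n / k) := lt_mul_div_of_sq_lt_mul hdvd hlt
    omega
  · obtain ⟨m, rfl⟩ := hk
    have half_length : (2 * m + 1 - 1) / 2 = m := by omega
    rw [half_length, sum_range_two_mul_add_one_sub_add, ← Nat.cast_mul,
      Nat.mul_div_cancel' hdvd]
end

section
/- Let n be a positive integer and k an odd divisor of n with k^2 > 2n. Then the 2n/k consecutive integers (k-1)/2 - n/k + 1, (k-1)/2 - n/k + 2, ..., (k-1)/2 + n/k are all positive and their sum is n; thus they form a decomposition of n of even length 2n/k. -/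
-- The outermost terms `m - q + 1` and `m + q` add up to `2 * m + 1`; removing them leaves the
-- same sum with `q - 1` in place of `q`.
theorem sum_range_two_mul_sub_add_one_add {R : Type*} [CommRing R] (m : R) (q : ℕ) :
    ∑ i ∈ Finset.range (2 * q), (m - q + 1 + i) = q * (2 * m + 1) := by
  induction q with
  | zero => simp
  | succ q ih =>
    have inner : ∑ i ∈ Finset.range (2 * q), (m - (q + 1 : ℕ) + 1 + (i + 1 : ℕ)) =
        q * (2 * m + 1) := by
      rw [← ih]
      refine Finset.sum_congr rfl fun i _ => ?_
      push_cast
      ring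
    rw [Nat.mul_succ, Finset.sum_range_succ, Finset.sum_range_succ', inner]
    push_cast
    ring

theorem div_le_pred_div_two_of_two_mul_lt_sq {n k : ℕ} (h : 2 * n < k ^ 2) :
    n / k ≤ (k - 1) / 2 := by
  have quotient_lt : 2 * (n / k) < k :=
    calc
      2 * (n / k) ≤ 2 * n / k := Nat.mul_div_le_mul_div_assoc 2 n k
      _ < k := Nat.div_lt_of_lt_mul (sq k ▸ h)
  omega

/-- Let `n` be a positive integer and `k` an odd divisor of `n` with `k² > 2n`.
Then the `2n/k` consecutive integers `(k-1)/2 - n/k + 1 + i`, for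
`0 ≤ i < 2n/k`, are all positive and their sum is `n`; thus they form a
decomposition of `n` of even length `2n/k`. -/
theorem even_decomposition_of_large_odd_divisor (n k : ℕ) (hn : 0 < n)
    (hk : Odd k) (hdvd : k ∣ n) (hgt : 2 * n < k ^ 2) :
    (∀ i ∈ Finset.range (2 * n / k),
        0 < (((k - 1) / 2 : ℕ) : ℤ) - ((n / k : ℕ) : ℤ) + 1 + i) ∧
      (Finset.range (2 * n / k)).sum
          (fun i => (((k - 1) / 2 : ℕ) : ℤ) - ((n / k : ℕ) : ℤ) + 1 + i) = n ∧
      Even (2 * n / k) := by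
  have length_eq : 2 * n / k = 2 * (n / k) := Nat.mul_div_assoc 2 hdvd
  have pair_sum : 2 * ((k - 1) / 2) + 1 = k := by grind
  have quotient_le : n / k ≤ (k - 1) / 2 := div_le_pred_div_two_of_two_mul_lt_sq hgt
  rw [length_eq]
  refine ⟨fun i _ => by omega, ?_, even_two_mul _⟩
  rw [sum_range_two_mul_sub_add_one_add]
  have product_eq : n / k * (2 * ((k - 1) / 2) + 1) = n := by
    rw [pair_sum, Nat.div_mul_cancel hdvd]
  exact_mod_cast product_eq
end

section
/- Let n be a positive integer with odd part k_s. If k is an odd divisor of n with k^2 > 2n, then k_s/k is an odd divisor of n whose square is less than 2n. Consequently, the number of even decompositions of n is at most the number of odd decompositions of n. -/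
/-!
A decomposition `a + 1, …, a + m` of `n` is a factorization `2 * n = m * (2 * a + m + 1)` into
factors of opposite parity, the smaller one being the length `m`. Its odd factor `k` is an odd
divisor of `n`, and it determines the decomposition: `k` is the length when `k ^ 2 < 2 * n`, and the
length is even when `2 * n < k ^ 2`. With `s` the odd part of `n`, the map `k ↦ s / k` sends the
large odd divisors injectively to small ones.
-/

/-- The odd divisors of `n` below `√(2n)`; they are the lengths of the odd decompositions of `n`. -/
def smallOddDivisors (n : ℕ) : Set ℕ :=
  {k | k ∣ n ∧ Odd k ∧ k ^ 2 < 2 * n}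

/-- The odd divisors of `n` above `√(2n)`; they are the cofactors `2 * n / m` of the lengths `m` of
the even decompositions of `n`. -/
def largeOddDivisors (n : ℕ) : Set ℕ :=
  {k | k ∣ n ∧ Odd k ∧ 2 * n < k ^ 2}

theorem two_mul_sum_range_consecutive (a m : ℕ) :
    2 * ∑ i ∈ Finset.range m, (a + i + 1) = m * (2 * a + m + 1) := by
  induction m with
  | zero => simp
  | succ m ih => rw [Finset.sum_range_succ, mul_add, ih]; ring

theorem isDecomp_iff_mul_eq_two_mul {n a m : ℕ} :
    IsDecomp n a m ↔ 1 ≤ m ∧ m * (2 * a + m + 1) = 2 * n := by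
  rw [IsDecomp, ← two_mul_sum_range_consecutive, Nat.mul_right_inj two_ne_zero]

theorem bijOn_length_odd_decompositions (n : ℕ) :
    Set.BijOn Prod.snd {p : ℕ × ℕ | IsDecomp n p.1 p.2 ∧ Odd p.2} (smallOddDivisors n) := by
  refine ⟨?mapsTo, ?injOn, ?surjOn⟩
  case mapsTo =>
    rintro ⟨a, m⟩ ⟨hdecomp, hodd⟩
    obtain ⟨hpos, hmul⟩ := isDecomp_iff_mul_eq_two_mul.1 hdecomp
    have hdvd : m ∣ n :=
      hodd.coprime_two_right.dvd_of_dvd_mul_left (hmul ▸ Nat.dvd_mul_right m _)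
    have hlt : m ^ 2 < 2 * n := calc
      m ^ 2 = m * m := sq m
      _ < m * (2 * a + m + 1) := Nat.mul_lt_mul_of_pos_left (by lia) hpos
      _ = 2 * n := hmul
    exact ⟨hdvd, hodd, hlt⟩
  case injOn =>
    rintro ⟨a, m⟩ ⟨hdecomp, -⟩ ⟨b, _⟩ ⟨hdecomp', -⟩ rfl
    obtain ⟨hpos, hmul⟩ := isDecomp_iff_mul_eq_two_mul.1 hdecomp
    obtain ⟨-, hmul'⟩ := isDecomp_iff_mul_eq_two_mul.1 hdecomp'
    have hcofactor : 2 * a + m + 1 = 2 * b + m + 1 :=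
      Nat.eq_of_mul_eq_mul_left hpos (hmul.trans hmul'.symm)
    obtain rfl : a = b := by lia
    rfl
  case surjOn =>
    rintro k ⟨⟨q, rfl⟩, hodd, hlt⟩
    have hkq : k < 2 * q := by nlinarith
    obtain ⟨a, ha⟩ : ∃ a, 2 * a + k + 1 = 2 * q := by
      obtain ⟨r, rfl⟩ := hodd
      exact ⟨q - r - 1, by lia⟩
    refine ⟨(a, k), ⟨isDecomp_iff_mul_eq_two_mul.2 ⟨hodd.pos, ?_⟩, hodd⟩, rfl⟩
    rw [ha]; ring

theorem bijOn_cofactor_even_decompositions {n : ℕ} (hn : 0 < n) :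
    Set.BijOn (fun p : ℕ × ℕ ↦ 2 * p.1 + p.2 + 1)
      {p : ℕ × ℕ | IsDecomp n p.1 p.2 ∧ Even p.2} (largeOddDivisors n) := by
  refine ⟨?mapsTo, ?injOn, ?surjOn⟩
  case mapsTo =>
    rintro ⟨a, m⟩ ⟨hdecomp, heven⟩
    obtain ⟨-, hmul⟩ := isDecomp_iff_mul_eq_two_mul.1 hdecomp
    have hodd : Odd (2 * a + m + 1) := ((even_two_mul a).add heven).add_one
    have hdvd : 2 * a + m + 1 ∣ n :=
      hodd.coprime_two_right.dvd_of_dvd_mul_left (hmul ▸ Nat.dvd_mul_left _ m)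
    have hlt : 2 * n < (2 * a + m + 1) ^ 2 := calc
      2 * n = m * (2 * a + m + 1) := hmul.symm
      _ < (2 * a + m + 1) * (2 * a + m + 1) := Nat.mul_lt_mul_of_pos_right (by lia) hodd.pos
      _ = (2 * a + m + 1) ^ 2 := (sq _).symm
    exact ⟨hdvd, hodd, hlt⟩
  case injOn =>
    rintro ⟨a, m⟩ ⟨hdecomp, -⟩ ⟨b, l⟩ ⟨hdecomp', -⟩ (hcofactor : 2 * a + m + 1 = 2 * b + l + 1)
    obtain ⟨-, hmul⟩ := isDecomp_iff_mul_eq_two_mul.1 hdecomp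
    obtain ⟨-, hmul'⟩ := isDecomp_iff_mul_eq_two_mul.1 hdecomp'
    dsimp only at hmul hmul'
    rw [← hcofactor] at hmul'
    obtain rfl : m = l := Nat.eq_of_mul_eq_mul_right (Nat.succ_pos _) (hmul.trans hmul'.symm)
    obtain rfl : a = b := by lia
    rfl
  case surjOn =>
    rintro k ⟨⟨q, rfl⟩, hodd, hlt⟩
    have hq : 0 < q := Nat.pos_of_mul_pos_left hn
    have hqk : 2 * q < k := by nlinarith
    obtain ⟨a, ha⟩ : ∃ a, 2 * a + 2 * q + 1 = k := by
      obtain ⟨r, rfl⟩ := hodd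
      exact ⟨r - q, by lia⟩
    refine ⟨(a, 2 * q), ⟨isDecomp_iff_mul_eq_two_mul.2 ⟨by lia, ?_⟩, even_two_mul q⟩, ha⟩
    rw [ha]; ring

theorem finite_smallOddDivisors (n : ℕ) : (smallOddDivisors n).Finite :=
  (Set.finite_Iio (2 * n)).subset fun k hk ↦ (Nat.le_self_pow two_ne_zero k).trans_lt hk.2.2

theorem dvd_of_odd_of_dvd_two_pow_mul {k d s : ℕ} (hk : Odd k) (h : k ∣ 2 ^ d * s) : k ∣ s :=
  (hk.coprime_two_right.pow_right d).dvd_of_dvd_mul_left h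

theorem sq_div_le_of_lt_sq {s k : ℕ} (h : s < k ^ 2) : (s / k) ^ 2 ≤ s := by
  have hlt : s / k < k := Nat.div_lt_of_lt_mul (sq k ▸ h)
  calc
    (s / k) ^ 2 = s / k * (s / k) := sq _
    _ ≤ s / k * k := Nat.mul_le_mul_left _ hlt.le
    _ ≤ s := Nat.div_mul_le_self s k

theorem mapsTo_div_largeOddDivisors {s : ℕ} (hs : Odd s) (d : ℕ) :
    Set.MapsTo (s / ·) (largeOddDivisors (2 ^ d * s)) (smallOddDivisors (2 ^ d * s)) := by
  rintro k ⟨hdvd, hodd, hlt⟩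
  have hquot : s / k ∣ s := Nat.div_dvd_of_dvd (dvd_of_odd_of_dvd_two_pow_mul hodd hdvd)
  have hle : s ≤ 2 ^ d * s := Nat.le_mul_of_pos_left s (Nat.two_pow_pos d)
  have hsq : (s / k) ^ 2 ≤ s := sq_div_le_of_lt_sq (by lia)
  have hpos : 0 < s := hs.pos
  exact ⟨hquot.mul_left _, hs.of_dvd_nat hquot, by lia⟩

theorem injOn_div_largeOddDivisors {s : ℕ} (hs : s ≠ 0) (d : ℕ) :
    Set.InjOn (s / ·) (largeOddDivisors (2 ^ d * s)) :=
  fun _ hk _ hl heq ↦ (Nat.div_eq_iff_eq_of_dvd_dvd hs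
    (dvd_of_odd_of_dvd_two_pow_mul hk.2.1 hk.1) (dvd_of_odd_of_dvd_two_pow_mul hl.2.1 hl.1)).1 heq

/-- Let `n` be a positive integer with odd part `ks`. If `k` is an odd divisor
of `n` with `k² > 2n`, then `ks/k` is an odd divisor of `n` whose square is
less than `2n`. Consequently the number of even decompositions of `n` is at
most the number of odd decompositions of `n`. -/
theorem even_decompositions_le_odd (n d ks : ℕ) (hn : 0 < n)
    (hks : Odd ks) (hfact : n = 2 ^ d * ks) :
    (∀ k : ℕ, k ∣ n → Odd k → 2 * n < k ^ 2 →
        (ks / k ∣ n ∧ Odd (ks / k) ∧ (ks / k) ^ 2 < 2 * n)) ∧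
      {p : ℕ × ℕ | IsDecomp n p.1 p.2 ∧ Even p.2}.ncard ≤
        {p : ℕ × ℕ | IsDecomp n p.1 p.2 ∧ Odd p.2}.ncard := by
  subst hfact
  have hmaps := mapsTo_div_largeOddDivisors hks d
  refine ⟨fun k hdvd hodd hlt ↦ hmaps ⟨hdvd, hodd, hlt⟩, ?_⟩
  rw [(bijOn_cofactor_even_decompositions hn).ncard_eq,
    (bijOn_length_odd_decompositions _).ncard_eq]
  exact Set.ncard_le_ncard_of_injOn (ks / ·) hmaps
    (injOn_div_largeOddDivisors hks.pos.ne' d) (finite_smallOddDivisors _)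
end
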